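/- arXiv:1312.5906 — 4 statements merged into one kernel-verified Lean document; each statement's English description precedes it below -/
import Mathlib

section
/- For all quaternions w, z in the open unit ball 𝔹, δ(w,z) equals the modulus of the regular Möbius transformation associated with w evaluated at z, and also the modulus of the regular Möbius transformation associated with z evaluated at w. Concretely: δ(w,z) = ‖(1 − ẑ·conj(w))⁻¹ (ẑ − w)‖ where ẑ = (1 − zw)⁻¹ z (1 − zw), and likewise δ(w,z) = ‖(1 − ŵ·conj(z))⁻¹ (ŵ − z)‖ where ŵ = (1 − wz)⁻¹ w (1 − wz). (Here 1 − zw, 1 − ẑ·conj(w), 1 − wz, 1 − ŵ·conj(z) are all invertible since ‖z‖‖w‖ < 1.) -/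
noncomputable section

local notation "ℍ" => Quaternion ℝ

/-- The distance between the normalized reproducing kernels of the quaternionic Hardy
space `H²(𝔹)` at the points `w, z` of the unit ball. -/
def hardyDelta (w z : ℍ) : ℝ :=
  Real.sqrt (1 - (1 - ‖w‖ ^ 2) * (1 - ‖z‖ ^ 2) * ‖∑' n : ℕ, z ^ n * (star w) ^ n‖ ^ 2)

theorem hd_summable (w z : Quaternion ℝ) (hw : ‖w‖ < 1) (hz : ‖z‖ < 1) :
    Summable (fun n : ℕ => z ^ n * (star w) ^ n) := by
  have h1 : ‖z‖ * ‖w‖ < 1 := by nlinarith [norm_nonneg z, norm_nonneg w]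
  refine Summable.of_norm_bounded
    (summable_geometric_of_lt_one (by positivity) h1) (fun n => ?_)
  rw [norm_mul, norm_pow, norm_pow, norm_star, mul_pow]

theorem hd_rec (w z : Quaternion ℝ) (hw : ‖w‖ < 1) (hz : ‖z‖ < 1) :
    (∑' n : ℕ, z ^ n * (star w) ^ n) =
      1 + z * (∑' n : ℕ, z ^ n * (star w) ^ n) * star w := by
  have hs := hd_summable w z hw hz
  conv_lhs => rw [hs.tsum_eq_zero_add]
  rw [← hs.tsum_mul_left, ← (hs.mul_left z).tsum_mul_right]
  simp only [pow_zero, mul_one]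
  congr 1
  refine tsum_congr fun n => ?_
  rw [pow_succ' z, pow_succ (star w)]
  simp only [mul_assoc]

theorem hd_one_sub_ne (x y : Quaternion ℝ) (hx : ‖x‖ < 1) (hy : ‖y‖ < 1) :
    1 - x * y ≠ 0 := by
  intro h
  have h2 : ‖x * y‖ = 1 := by rw [← sub_eq_zero.mp h, norm_one]
  rw [norm_mul] at h2
  nlinarith [norm_nonneg x, norm_nonneg y]

theorem hd_norm_id (x w : Quaternion ℝ) :
    ‖x - w‖ ^ 2 = ‖1 - x * star w‖ ^ 2 - (1 - ‖w‖ ^ 2) * (1 - ‖x‖ ^ 2) := by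
  simp only [pow_two, ← Quaternion.normSq_eq_norm_mul_self, Quaternion.normSq_def']
  have h1 : (1 : Quaternion ℝ).re = 1 := rfl
  have h2 : (1 : Quaternion ℝ).imI = 0 := rfl
  have h3 : (1 : Quaternion ℝ).imJ = 0 := rfl
  have h4 : (1 : Quaternion ℝ).imK = 0 := rfl
  simp [h1, h2, h3, h4]
  ring

theorem hd_half (w z : Quaternion ℝ) (hw : ‖w‖ < 1) (hz : ‖z‖ < 1) :
    hardyDelta w z =
      ‖(1 - ((1 - z * w)⁻¹ * z * (1 - z * w)) * star w)⁻¹ *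
        (((1 - z * w)⁻¹ * z * (1 - z * w)) - w)‖ := by
  have ha : 1 - z * w ≠ 0 := hd_one_sub_ne z w hz hw
  have hrec := hd_rec w z hw hz
  unfold hardyDelta
  set S := ∑' n : ℕ, z ^ n * (star w) ^ n with hS
  set x := (1 - z * w)⁻¹ * z * (1 - z * w) with hx
  have hxn : ‖x‖ = ‖z‖ := by
    have : ‖1 - z * w‖ ≠ 0 := norm_ne_zero_iff.mpr ha
    rw [hx, norm_mul, norm_mul, norm_inv]
    field_simp
  have hc : 1 - x * star w ≠ 0 := hd_one_sub_ne x (star w) (hxn ▸ hz) (by rwa [norm_star])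
  have hax : (1 - z * w) * x = z * (1 - z * w) := by
    rw [hx, mul_assoc, mul_inv_cancel_left₀ ha]
  have hP : (1 - z * w) * (1 - x * star w) * S = 1 - z * w := by
    have e1 : (1 - z * w) * (1 - x * star w) = 1 - z * (w + star w) + z * z * (w * star w) := by
      rw [mul_sub, ← mul_assoc, hax]; noncomm_ring
    have c1 : (w + star w) * S = S * (w + star w) := by
      rw [Quaternion.self_add_star']
      exact Quaternion.coe_commutes _ _
    have c2 : (w * star w) * S = S * (star w * w) := by
      rw [Quaternion.self_mul_star, Quaternion.star_mul_self]
      exact Quaternion.coe_commutes _ _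
    have h3 : S - z * S * star w = 1 := by rw [sub_eq_iff_eq_add]; exact hrec
    calc (1 - z * w) * (1 - x * star w) * S
        = S - z * ((w + star w) * S) + z * z * ((w * star w) * S) := by
          rw [e1]; noncomm_ring
      _ = (S - z * S * star w) - z * (S - z * S * star w) * w := by
          rw [c1, c2]; noncomm_ring
      _ = 1 - z * w := by rw [h3, mul_one]
  have hcS : (1 - x * star w) * S = 1 := by
    apply mul_left_cancel₀ ha
    rw [← mul_assoc, hP, mul_one]
  have hSinv : S = (1 - x * star w)⁻¹ := eq_inv_of_mul_eq_one_right hcS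
  have hn : ‖1 - x * star w‖ ≠ 0 := norm_ne_zero_iff.mpr hc
  rw [← Real.sqrt_sq (norm_nonneg ((1 - x * star w)⁻¹ * (x - w)))]
  congr 1
  rw [hSinv, norm_mul, mul_pow, hd_norm_id, hxn, norm_inv]
  field_simp

theorem hd_symm (w z : Quaternion ℝ) : hardyDelta w z = hardyDelta z w := by
  have h : ‖∑' n : ℕ, z ^ n * (star w) ^ n‖ = ‖∑' n : ℕ, w ^ n * (star z) ^ n‖ := by
    rw [← norm_star, tsum_star]
    simp only [star_mul, star_pow, star_star]
  unfold hardyDelta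
  rw [h, mul_comm (1 - ‖w‖ ^ 2)]

/-- For `w, z` in the quaternionic unit ball, `δ(w,z)` equals the modulus of the regular
Möbius transformation associated with `w` evaluated at `z`, and also the modulus of the
regular Möbius transformation associated with `z` evaluated at `w`:
`δ(w,z) = ‖(1 − ẑ·conj(w))⁻¹ (ẑ − w)‖` with `ẑ = (1 − zw)⁻¹ z (1 − zw)`, and
`δ(w,z) = ‖(1 − ŵ·conj(z))⁻¹ (ŵ − z)‖` with `ŵ = (1 − wz)⁻¹ w (1 − wz)`. -/
theorem hardyDelta_eq_regular_moebius (w z : ℍ) (hw : ‖w‖ < 1) (hz : ‖z‖ < 1) :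
    (hardyDelta w z =
      ‖(1 - ((1 - z * w)⁻¹ * z * (1 - z * w)) * star w)⁻¹ *
        (((1 - z * w)⁻¹ * z * (1 - z * w)) - w)‖) ∧
    (hardyDelta w z =
      ‖(1 - ((1 - w * z)⁻¹ * w * (1 - w * z)) * star z)⁻¹ *
        (((1 - w * z)⁻¹ * w * (1 - w * z)) - z)‖) := by
  exact ⟨hd_half w z hw hz, (hd_symm w z).trans (hd_half z w hz hw)⟩
end
end

section
/- For all quaternions z, w with ‖z‖·‖w‖ < 1, the quaternion 1 − 2 z Re(w) + z² ‖w‖² is invertible and ∑_{n=0}^∞ zⁿ (conj w)ⁿ = (1 − 2 z Re(w) + z² ‖w‖²)⁻¹ (1 − z w). (This is the closed form of the reproducing kernel q ↦ (1 − q·conj(w))^{−∗} of the quaternionic Hardy space H²(𝔹), evaluated at q = z.) -/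
local notation "ℍ" => Quaternion ℝ

/-- Closed form of the reproducing kernel of the quaternionic Hardy space `H²(𝔹)`:
for quaternions `z, w` with `‖z‖·‖w‖ < 1`, the quaternion `1 − 2 z Re(w) + z² ‖w‖²`
is invertible and `∑_{n} zⁿ (conj w)ⁿ = (1 − 2 z Re(w) + z² ‖w‖²)⁻¹ (1 − z w)`. -/
theorem hardy_kernel_closed_form (z w : ℍ) (h : ‖z‖ * ‖w‖ < 1) :
    (1 - 2 * z * (w.re : ℍ) + z ^ 2 * ((‖w‖ ^ 2 : ℝ) : ℍ)) ≠ 0 ∧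
    (∑' n : ℕ, z ^ n * (star w) ^ n) =
      (1 - 2 * z * (w.re : ℍ) + z ^ 2 * ((‖w‖ ^ 2 : ℝ) : ℍ))⁻¹ * (1 - z * w) := by
  have hs : Summable (fun n : ℕ => z ^ n * (star w) ^ n) := by
    apply Summable.of_norm
    have : (fun n : ℕ => ‖z ^ n * (star w) ^ n‖) = fun n => (‖z‖ * ‖w‖) ^ n := by
      funext n
      rw [norm_mul, norm_pow, norm_pow, Quaternion.norm_star, mul_pow]
    rw [this]
    exact summable_geometric_of_lt_one (by positivity) h
  set S : ℍ := ∑' n : ℕ, z ^ n * (star w) ^ n with hS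
  have h1 : S - z * S * star w = 1 := by
    have e : S = 1 + z * S * star w := by
      conv_lhs => rw [hS, hs.tsum_eq_zero_add]
      rw [hS, ← tsum_mul_left, ← tsum_mul_right]
      simp only [pow_zero, mul_one]
      congr 1
      refine tsum_congr fun n => ?_
      rw [pow_succ' z, pow_succ (star w)]
      simp only [mul_assoc]
    rw [sub_eq_iff_eq_add]
    exact e
  have h2 : (2 : ℍ) * (w.re : ℍ) = star w + w := by
    ext <;> simp [two_mul]
  have h3 : ((‖w‖ ^ 2 : ℝ) : ℍ) = star w * w := by
    rw [Quaternion.star_mul_self, Quaternion.normSq_eq_norm_mul_self, sq]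
  have c2 : 2 * z * (w.re : ℍ) * S = z * S * (star w + w) := by
    rw [← h2, mul_assoc, Quaternion.coe_commutes, two_mul, two_mul]
    noncomm_ring
  have c3 : z ^ 2 * ((‖w‖ ^ 2 : ℝ) : ℍ) * S = z ^ 2 * S * (star w * w) := by
    rw [← h3, mul_assoc, Quaternion.coe_commutes, mul_assoc]
  have key : (1 - 2 * z * (w.re : ℍ) + z ^ 2 * ((‖w‖ ^ 2 : ℝ) : ℍ)) * S = 1 - z * w := by
    calc _ = (S - z * S * star w) - z * (S - z * S * star w) * w := by
          rw [add_mul, sub_mul, c2, c3, one_mul]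
          noncomm_ring
      _ = _ := by rw [h1, mul_one]
  have hD : (1 - 2 * z * (w.re : ℍ) + z ^ 2 * ((‖w‖ ^ 2 : ℝ) : ℍ)) ≠ 0 := by
    intro h0
    rw [h0, zero_mul] at key
    have : z * w = 1 := (sub_eq_zero.mp key.symm).symm
    rw [← norm_mul, this, norm_one] at h
    exact lt_irrefl _ h
  refine ⟨hD, ?_⟩
  rw [← key, inv_mul_cancel_left₀ hD]
end

section
/- For every quaternion w with ‖w‖ < 1, the quaternion 1 − w² is invertible and ∑_{n=0}^∞ ‖wⁿ − (conj w)ⁿ‖² = 2/(1−‖w‖²) − 2·Re((1 − w²)⁻¹). (Dividing by ‖w − conj(w)‖², this computes the H²(𝔹)-norm of the spherical derivative of the Hardy-space reproducing kernel, ‖∂_s k_q(w)‖² = ‖w − conj(w)‖⁻²·(2/(1−‖w‖²) − 1/(1−w²) − 1/(1−(conj w)²)), a coefficient of the invariant Riemannian metric g.) -/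
local notation "ℍ" => Quaternion ℝ

/-- For every quaternion `w` with `‖w‖ < 1`, the quaternion `1 − w²` is invertible and
`∑_{n=0}^∞ ‖wⁿ − (conj w)ⁿ‖² = 2/(1−‖w‖²) − 2·Re((1 − w²)⁻¹)`.
(This computes the `H²(𝔹)`-norm of the spherical derivative of the Hardy-space
reproducing kernel, a coefficient of the invariant Riemannian metric `g`.) -/
theorem sum_norm_sq_pow_sub_star_pow (w : ℍ) (hw : ‖w‖ < 1) :
    (1 - w ^ 2) ≠ 0 ∧
    (∑' n : ℕ, ‖w ^ n - (star w) ^ n‖ ^ 2) =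
      2 / (1 - ‖w‖ ^ 2) - 2 * ((1 - w ^ 2)⁻¹).re := by
  have hw2 : ‖w ^ 2‖ < 1 := by
    rw [norm_pow]
    exact pow_lt_one₀ (norm_nonneg w) hw two_ne_zero
  have hr : ‖w‖ ^ 2 < 1 := pow_lt_one₀ (norm_nonneg w) hw two_ne_zero
  constructor
  · intro h
    have h1 : w ^ 2 = 1 := (sub_eq_zero.mp h).symm
    rw [h1, norm_one] at hw2
    exact lt_irrefl _ hw2
  · have hA : HasSum (fun n : ℕ => (‖w‖ ^ 2) ^ n) (1 - ‖w‖ ^ 2)⁻¹ :=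
      hasSum_geometric_of_lt_one (by positivity) hr
    have hB : HasSum (fun n : ℕ => (w ^ 2) ^ n) (1 - w ^ 2)⁻¹ :=
      hasSum_geometric_of_norm_lt_one hw2
    have hC : HasSum (fun n : ℕ => ((w ^ 2) ^ n).re) ((1 - w ^ 2)⁻¹).re :=
      hB.map (AddMonoidHom.mk' (fun q : Quaternion ℝ => q.re) (fun _ _ => rfl))
        Quaternion.continuous_re
    have hD := (hA.mul_left 2).sub (hC.mul_left 2)
    rw [div_eq_mul_inv, ← hD.tsum_eq]
    congr 1
    funext n
    have hi : inner ℝ (w ^ n) (star w ^ n) = ((w ^ 2) ^ n).re := by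
      rw [Quaternion.inner_def, star_pow, star_star, ← pow_add, ← pow_mul, two_mul]
    rw [norm_sub_sq_real, hi, norm_pow, norm_pow, Quaternion.norm_star]
    ring
end

section
/- For z, w ∈ ℍ⁺, let C⁻¹(q) = (1+q)⁻¹(q−1) (the inverse Cayley map, mapping ℍ⁺ into 𝔹). Define k_𝔹(w', z') = (1 − 2 z' Re(w') + z'² ‖w'‖²)⁻¹ (1 − z' w') for w', z' ∈ 𝔹 (the reproducing kernel of the Hardy space H²(𝔹), i.e. (1 − q·conj(w'))^{−∗} evaluated at q = z'), and k_{ℍ⁺}(w, z) = (z² + 2 Re(w) z + ‖w‖²)⁻¹ (z + w) (the reproducing kernel of the Hardy space H²(ℍ⁺), i.e. (q + conj(w))^{−∗} evaluated at q = z). Then the kernel of H²(𝔹) is a rescaling of the kernel of H²(ℍ⁺): k_𝔹(C⁻¹(w), C⁻¹(z)) = (1/2)·(1 + z)·k_{ℍ⁺}(w, z)·(1 + conj(w)). (All quaternions inverted here are invertible: for z, w ∈ ℍ⁺ one has ‖C⁻¹(z)‖, ‖C⁻¹(w)‖ < 1 and z² + 2 Re(w) z + ‖w‖² ≠ 0.)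 -/
noncomputable section

local notation "ℍ" => Quaternion ℝ

/-- The inverse Cayley map `C⁻¹(q) = (1+q)⁻¹(q−1)`, mapping the right half-space `ℍ⁺`
into the unit ball `𝔹`. -/
def CayleyInv (q : ℍ) : ℍ := (1 + q)⁻¹ * (q - 1)

/-- The reproducing kernel of the Hardy space `H²(𝔹)`, i.e. the pointwise value of
`(1 − q·conj(w'))^{−∗}` at `q = z'`. -/
def kernBall (w' z' : ℍ) : ℍ :=
  (1 - 2 * z' * (w'.re : ℍ) + z' ^ 2 * ((‖w'‖ ^ 2 : ℝ) : ℍ))⁻¹ * (1 - z' * w')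

/-- The reproducing kernel of the Hardy space `H²(ℍ⁺)`, i.e. the pointwise value of
`(q + conj(w))^{−∗}` at `q = z`. -/
def kernHalf (w z : ℍ) : ℍ :=
  (z ^ 2 + 2 * (w.re : ℍ) * z + ((‖w‖ ^ 2 : ℝ) : ℍ))⁻¹ * (z + w)

lemma aux_norm_sq (q : Quaternion ℝ) :
    ‖q‖ ^ 2 = q.re ^ 2 + q.imI ^ 2 + q.imJ ^ 2 + q.imK ^ 2 := by
  rw [sq, ← Quaternion.normSq_eq_norm_mul_self, Quaternion.normSq_def']

lemma aux_ne (q : Quaternion ℝ) (hq : 0 < q.re) : 1 + q ≠ 0 := by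
  intro h
  have := congrArg (fun x : Quaternion ℝ => x.re) h
  simp only [Quaternion.re_add, Quaternion.re_one, Quaternion.re_zero] at this
  linarith

lemma aux_lt (q : Quaternion ℝ) (hq : 0 < q.re) : ‖CayleyInv q‖ < 1 := by
  have h0 := norm_pos_iff.mpr (aux_ne q hq)
  unfold CayleyInv
  rw [norm_mul, norm_inv, inv_mul_lt_iff₀ h0, mul_one]
  refine lt_of_pow_lt_pow_left₀ 2 h0.le ?_
  rw [aux_norm_sq, aux_norm_sq]
  simp [Quaternion.re_one, Quaternion.imI_one, Quaternion.imJ_one, Quaternion.imK_one]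
  nlinarith

lemma aux_half_ne (z w : Quaternion ℝ) (hz : 0 < z.re) (hw : 0 < w.re) :
    (z ^ 2 + 2 * (w.re : Quaternion ℝ) * z + ((‖w‖ ^ 2 : ℝ) : Quaternion ℝ)) ≠ 0 := by
  have e2 : (2 : Quaternion ℝ) = ((2 : ℝ) : Quaternion ℝ) := by norm_cast
  intro h
  rw [aux_norm_sq, e2, sq] at h
  have h1 := congrArg (fun x : Quaternion ℝ => x.re) h
  have h2 := congrArg (fun x : Quaternion ℝ => x.imI) h
  have h3 := congrArg (fun x : Quaternion ℝ => x.imJ) h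
  have h4 := congrArg (fun x : Quaternion ℝ => x.imK) h
  simp only [Quaternion.re_add, Quaternion.imI_add, Quaternion.imJ_add, Quaternion.imK_add,
    Quaternion.re_mul, Quaternion.imI_mul, Quaternion.imJ_mul, Quaternion.imK_mul,
    Quaternion.re_coe, Quaternion.imI_coe, Quaternion.imJ_coe, Quaternion.imK_coe,
    Quaternion.re_zero, Quaternion.imI_zero, Quaternion.imJ_zero, Quaternion.imK_zero] at h1 h2 h3 h4
  have hp : z.re + w.re ≠ 0 := by positivity
  have i2 : z.imI = 0 := by
    apply (mul_eq_zero.mp (_ : (z.re + w.re) * z.imI = 0)).resolve_left hp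
    linarith
  have i3 : z.imJ = 0 := by
    apply (mul_eq_zero.mp (_ : (z.re + w.re) * z.imJ = 0)).resolve_left hp
    linarith
  have i4 : z.imK = 0 := by
    apply (mul_eq_zero.mp (_ : (z.re + w.re) * z.imK = 0)).resolve_left hp
    linarith
  rw [i2, i3, i4] at h1
  nlinarith [mul_pos hz hw, mul_pos hz hz, sq_nonneg w.re, sq_nonneg w.imI, sq_nonneg w.imJ,
    sq_nonneg w.imK]

lemma aux_star (w : Quaternion ℝ) :
    (1 + w) * (1 + star w) = ((‖1 + w‖ ^ 2 : ℝ) : Quaternion ℝ) := by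
  rw [aux_norm_sq]
  ext <;> simp only [Quaternion.re_star, Quaternion.imI_star, Quaternion.imJ_star, Quaternion.imK_star,
    Quaternion.re_add, Quaternion.imI_add, Quaternion.imJ_add, Quaternion.imK_add,
    Quaternion.re_sub, Quaternion.imI_sub, Quaternion.imJ_sub, Quaternion.imK_sub,
    Quaternion.re_mul, Quaternion.imI_mul, Quaternion.imJ_mul, Quaternion.imK_mul,
    Quaternion.re_coe, Quaternion.imI_coe, Quaternion.imJ_coe, Quaternion.imK_coe,
    Quaternion.re_one, Quaternion.imI_one, Quaternion.imJ_one, Quaternion.imK_one] <;> ring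

lemma aux_re (w : Quaternion ℝ) (hw : 0 < w.re) :
    ‖1 + w‖ ^ 2 * (CayleyInv w).re = ‖w‖ ^ 2 - 1 := by
  have h0 := norm_pos_iff.mpr (aux_ne w hw)
  have h : (1 + w)⁻¹ = (‖1 + w‖ ^ 2)⁻¹ • star (1 + w) := by
    rw [sq, ← Quaternion.normSq_eq_norm_mul_self]; rfl
  unfold CayleyInv
  rw [h, smul_mul_assoc, Quaternion.re_smul, smul_eq_mul, ← mul_assoc,
    mul_inv_cancel₀ (by positivity), one_mul, aux_norm_sq]
  simp [Quaternion.re_one, Quaternion.imI_one, Quaternion.imJ_one, Quaternion.imK_one]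
  ring

lemma aux_nsq (w : Quaternion ℝ) (hw : 0 < w.re) :
    ‖1 + w‖ ^ 2 * ‖CayleyInv w‖ ^ 2 = ‖w - 1‖ ^ 2 := by
  have h0 := norm_pos_iff.mpr (aux_ne w hw)
  unfold CayleyInv
  rw [norm_mul, norm_inv]
  field_simp

lemma aux_mul (z : Quaternion ℝ) (hz : 0 < z.re) : (1 + z) * CayleyInv z = z - 1 := by
  unfold CayleyInv
  rw [← mul_assoc, mul_inv_cancel₀ (aux_ne z hz), one_mul]

lemma aux_mul_right (z : Quaternion ℝ) (hz : 0 < z.re) : CayleyInv z * (1 + z) = z - 1 := by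
  unfold CayleyInv
  have h : (z - 1) * (1 + z) = (1 + z) * (z - 1) := by noncomm_ring
  rw [mul_assoc, h, ← mul_assoc, inv_mul_cancel₀ (aux_ne z hz), one_mul]

lemma aux_den (z w : Quaternion ℝ) (hz : 0 < z.re) (hw : 0 < w.re) :
    (1 + z) ^ 2 * (1 - 2 * CayleyInv z * ((CayleyInv w).re : Quaternion ℝ)
      + CayleyInv z ^ 2 * ((‖CayleyInv w‖ ^ 2 : ℝ) : Quaternion ℝ))
      * ((‖1 + w‖ ^ 2 : ℝ) : Quaternion ℝ) =
    4 * (z ^ 2 + 2 * (w.re : Quaternion ℝ) * z + ((‖w‖ ^ 2 : ℝ) : Quaternion ℝ)) := by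
  have e2 : (2 : Quaternion ℝ) = ((2 : ℝ) : Quaternion ℝ) := by norm_cast
  have e4 : (4 : Quaternion ℝ) = ((4 : ℝ) : Quaternion ℝ) := by norm_cast
  have h1 : ((CayleyInv w).re : Quaternion ℝ) * ((‖1 + w‖ ^ 2 : ℝ) : Quaternion ℝ)
      = ((‖w‖ ^ 2 - 1 : ℝ) : Quaternion ℝ) := by
    rw [← Quaternion.coe_mul, mul_comm, aux_re w hw]
  have h2 : ((‖CayleyInv w‖ ^ 2 : ℝ) : Quaternion ℝ) * ((‖1 + w‖ ^ 2 : ℝ) : Quaternion ℝ)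
      = ((‖w - 1‖ ^ 2 : ℝ) : Quaternion ℝ) := by
    rw [← Quaternion.coe_mul, mul_comm, aux_nsq w hw]
  have h3 : (1 + z) ^ 2 * CayleyInv z = (1 + z) * (z - 1) := by
    rw [sq, mul_assoc, aux_mul z hz]
  have h4 : (1 + z) ^ 2 * CayleyInv z ^ 2 = (z - 1) ^ 2 := by
    rw [sq (CayleyInv z), ← mul_assoc, h3, mul_assoc, ← aux_mul_right z hz]
    have : (1 + z) * (CayleyInv z * (1 + z) * CayleyInv z)
      = ((1 + z) * CayleyInv z) * ((1 + z) * CayleyInv z) := by simp only [mul_assoc]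
    rw [this, aux_mul z hz, aux_mul_right z hz, sq]
  have h5 : (1 + z) ^ 2 * (1 - 2 * CayleyInv z * ((CayleyInv w).re : Quaternion ℝ)
      + CayleyInv z ^ 2 * ((‖CayleyInv w‖ ^ 2 : ℝ) : Quaternion ℝ))
      * ((‖1 + w‖ ^ 2 : ℝ) : Quaternion ℝ)
      = (1 + z) ^ 2 * ((‖1 + w‖ ^ 2 : ℝ) : Quaternion ℝ)
      - 2 * (((1 + z) ^ 2 * CayleyInv z) * (((CayleyInv w).re : Quaternion ℝ) * ((‖1 + w‖ ^ 2 : ℝ) : Quaternion ℝ)))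
      + ((1 + z) ^ 2 * CayleyInv z ^ 2) * (((‖CayleyInv w‖ ^ 2 : ℝ) : Quaternion ℝ) * ((‖1 + w‖ ^ 2 : ℝ) : Quaternion ℝ)) := by
    noncomm_ring
  rw [h5, h1, h2, h3, h4, aux_norm_sq, aux_norm_sq, aux_norm_sq, e2, e4, sq (1 + z), sq (z - 1), sq z]
  ext <;> simp only [Quaternion.re_add, Quaternion.imI_add, Quaternion.imJ_add, Quaternion.imK_add,
    Quaternion.re_sub, Quaternion.imI_sub, Quaternion.imJ_sub, Quaternion.imK_sub,
    Quaternion.re_mul, Quaternion.imI_mul, Quaternion.imJ_mul, Quaternion.imK_mul,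
    Quaternion.re_coe, Quaternion.imI_coe, Quaternion.imJ_coe, Quaternion.imK_coe,
    Quaternion.re_one, Quaternion.imI_one, Quaternion.imJ_one, Quaternion.imK_one] <;> ring

/-- The reproducing kernel of `H²(𝔹)` is a rescaling of the reproducing kernel of
`H²(ℍ⁺)`: for `z, w` in the right half-space,
`k_𝔹(C⁻¹(w), C⁻¹(z)) = (1/2)·(1 + z)·k_{ℍ⁺}(w, z)·(1 + conj(w))`; moreover all the
quaternions inverted here are invertible: `‖C⁻¹(z)‖, ‖C⁻¹(w)‖ < 1` and
`z² + 2 Re(w) z + ‖w‖² ≠ 0`. -/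
theorem kernBall_cayley_rescaling (z w : ℍ) (hz : 0 < z.re) (hw : 0 < w.re) :
    ‖CayleyInv z‖ < 1 ∧ ‖CayleyInv w‖ < 1 ∧
    (z ^ 2 + 2 * (w.re : ℍ) * z + ((‖w‖ ^ 2 : ℝ) : ℍ)) ≠ 0 ∧
    kernBall (CayleyInv w) (CayleyInv z) =
      ((1 / 2 : ℝ) : ℍ) * ((1 + z) * kernHalf w z * (1 + star w)) := by
  have hD := aux_half_ne z w hz hw
  refine ⟨aux_lt z hz, aux_lt w hw, hD, ?_⟩
  have hden := aux_den z w hz hw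
  unfold kernBall kernHalf
  set D := z ^ 2 + 2 * (w.re : ℍ) * z + ((‖w‖ ^ 2 : ℝ) : ℍ) with hDdef
  set B := 1 - 2 * CayleyInv z * ((CayleyInv w).re : ℍ)
      + CayleyInv z ^ 2 * ((‖CayleyInv w‖ ^ 2 : ℝ) : ℍ) with hB
  have e4 : (4 : ℍ) = ((4 : ℝ) : ℍ) := by norm_cast
  have h4 : (4 : ℍ) ≠ 0 := by
    intro h
    rw [e4] at h
    have := congrArg (fun x : Quaternion ℝ => x.re) h
    simp only [Quaternion.re_coe, Quaternion.re_zero] at this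
    norm_num at this
  have hP := aux_ne z hz
  have hB0 : B ≠ 0 := by
    intro h
    rw [h, mul_zero, zero_mul] at hden
    exact mul_ne_zero h4 hD hden.symm
  have hN0 : ((‖1 + w‖ ^ 2 : ℝ) : ℍ) ≠ 0 := by
    have h0 := norm_pos_iff.mpr (aux_ne w hw)
    have : (‖1 + w‖ ^ 2 : ℝ) ≠ 0 := by positivity
    exact fun h => this (Quaternion.coe_injective (by simpa using h))
  have hcz : Commute D z := by
    refine Commute.add_left (Commute.add_left (Commute.pow_left rfl 2) ?_) ?_
    · exact Commute.mul_left (Commute.mul_left (Nat.cast_commute 2 z)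
        (Quaternion.coe_commutes _ _)) rfl
    · exact Quaternion.coe_commutes _ _
  have hc : D * (1 + z) = (1 + z) * D := by
    exact ((Commute.one_right D).add_right hcz).eq
  have hhalf : (4 : ℍ) * ((1 / 2 : ℝ) : ℍ) = 2 := by
    rw [e4, ← Quaternion.coe_mul]; norm_num; norm_cast
  rw [inv_mul_eq_iff_eq_mul₀ hB0]
  apply mul_left_cancel₀ (pow_ne_zero 2 hP)
  apply mul_left_cancel₀ hN0
  have key : CayleyInv w * ((‖1 + w‖ ^ 2 : ℝ) : ℍ) = (w - 1) * (1 + star w) := by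
    rw [← aux_star, ← mul_assoc, aux_mul_right w hw]
  have L : ((‖1 + w‖ ^ 2 : ℝ) : ℍ) * ((1 + z) ^ 2 * (1 - CayleyInv z * CayleyInv w))
      = 2 * ((1 + z) * (z + w) * (1 + star w)) := by
    rw [Quaternion.coe_commutes]
    have : (1 + z) ^ 2 * (1 - CayleyInv z * CayleyInv w) * ((‖1 + w‖ ^ 2 : ℝ) : ℍ)
      = (1 + z) * ((1 + z) * ((‖1 + w‖ ^ 2 : ℝ) : ℍ)
        - ((1 + z) * CayleyInv z) * (CayleyInv w * ((‖1 + w‖ ^ 2 : ℝ) : ℍ))) := by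
      noncomm_ring
    rw [this, key, aux_mul z hz, ← aux_star]
    noncomm_ring
  have R : ∀ X : ℍ, ((‖1 + w‖ ^ 2 : ℝ) : ℍ) * ((1 + z) ^ 2 * (B * X)) = 4 * D * X := by
    intro X
    rw [← hden, ← Quaternion.coe_commutes]
    simp only [mul_assoc]
  rw [L, R]
  have hh : (4 : ℍ) * D * (((1 / 2 : ℝ) : ℍ) * ((1 + z) * (D⁻¹ * (z + w)) * (1 + star w)))
      = (4 * ((1 / 2 : ℝ) : ℍ)) * ((D * (1 + z)) * D⁻¹ * (z + w) * (1 + star w)) := by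
    rw [mul_assoc 4 D, ← mul_assoc D, ← Quaternion.coe_commutes]
    simp only [mul_assoc]
  rw [hh, hhalf, hc, mul_assoc (1 + z) D, mul_inv_cancel₀ hD, mul_one]
end
end
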